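/- Let X be a real Banach space, let E be a closed linear subspace of X that is reflexive (as a Banach space in its own right), and let F be a closed linear subspace of X that is simultaneously approximatively weakly compact. Assume E + F is closed. Then E + F is simultaneously approximatively weakly compact. -/

import Mathlib

/-!
The difficulty is that in a minimizing sequence `y n = e n + f n` of `E + F` the second summand is not
minimizing for any fixed set, because `e n` varies. Convex combinations repair this. By the open
mapping theorem `e n` may be taken bounded, so by reflexivity it has a weak limit point `e₀`, and
Mazur's theorem provides convex combinations of tails whose `E`-part tends to `e₀` in norm. Since
`simSup A` is convex, these combinations are again minimizing, so their `F`-parts are minimizing for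
`A - e₀` in `F` and have a weakly convergent subsequence. Hence for every subsequence of `y` the closed
convex hulls of its tails have a common point (`exists_mem_closure_convexHull`).

This property forces weak relative compactness (`exists_weak_limit_of_convex`). Let `ξ` be a weak-*
limit point of `y` in the bidual, and suppose `ξ` has distance more than `θ > 0` from `X`. Helly's
theorem (`exists_functional_of_far`) yields functionals `G M` in the unit ball and a subsequence `φ`
with `G M (y i) = 0` for `i < M` and `G M (y (φ k)) > θ` for `M ≤ k`. A common point `z` of the closed
convex hulls of the tails of `y ∘ φ` satisfies `G M z ≥ θ` for all `M`; but `z` is within `θ` of a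
finite convex combination, which `G M` kills for large `M`. A weakly convergent subsequence is
extracted in `exists_weakTendsto_subseq`, and its limit lies in the closed convex set `E + F`.
-/

open Filter Topology Pointwise

variable {X : Type*} [NormedAddCommGroup X] [NormedSpace ℝ X]

/-- `simSup A y = sup_{a ∈ A} ‖a - y‖`. -/
noncomputable def simSup (A : Set X) (y : X) : ℝ := ⨆ a : A, ‖(a : X) - y‖

/-- `simDist A C = inf_{y ∈ C} sup_{a ∈ A} ‖a - y‖`. -/
noncomputable def simDist (A C : Set X) : ℝ := ⨅ y : C, simSup A (y : X)

/-- The set of best simultaneous approximations `P_C(A)`. -/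
def simBest (A C : Set X) : Set X := {y | y ∈ C ∧ simSup A y = simDist A C}

/-- The set `P_C(A, δ)`. -/
def simBestApprox (A C : Set X) (δ : ℝ) : Set X :=
  {y | y ∈ C ∧ simSup A y < simDist A C + δ}

/-- `C` is simultaneously proximinal. -/
def SimProximinal (C : Set X) : Prop :=
  ∀ A : Set X, A.Nonempty → Bornology.IsBounded A → (simBest A C).Nonempty

/-- `y` is a minimizing sequence in `C` for `A`. -/
def IsMinimizing (A C : Set X) (y : ℕ → X) : Prop :=
  (∀ n, y n ∈ C) ∧ Tendsto (fun n => simSup A (y n)) atTop (𝓝 (simDist A C))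

/-- Weak convergence of a sequence. -/
def WeakTendsto (y : ℕ → X) (c : X) : Prop :=
  ∀ f : X →L[ℝ] ℝ, Tendsto (fun n => f (y n)) atTop (𝓝 (f c))

/-- `C` is simultaneously approximatively compact. -/
def SimApproxCompact (C : Set X) : Prop :=
  ∀ A : Set X, A.Nonempty → Bornology.IsBounded A → ∀ y : ℕ → X, IsMinimizing A C y →
    ∃ c ∈ C, ∃ φ : ℕ → ℕ, StrictMono φ ∧ Tendsto (y ∘ φ) atTop (𝓝 c)

/-- `C` is simultaneously approximatively weakly compact. -/
def SimApproxWeakCompact (C : Set X) : Prop :=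
  ∀ A : Set X, A.Nonempty → Bornology.IsBounded A → ∀ y : ℕ → X, IsMinimizing A C y →
    ∃ c ∈ C, ∃ φ : ℕ → ℕ, StrictMono φ ∧ WeakTendsto (y ∘ φ) c

/-- `C` is simultaneously strongly proximinal. -/
def SimStronglyProximinal (C : Set X) : Prop :=
  SimProximinal C ∧ ∀ A : Set X, A.Nonempty → Bornology.IsBounded A → ∀ ε > (0 : ℝ),
    ∃ δ > (0 : ℝ), simBestApprox A C δ ⊆ simBest A C + Metric.closedBall (0 : X) ε

/-- `C` is simultaneously weakly strongly proximinal. -/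
def SimWeakStronglyProximinal (C : Set X) : Prop :=
  SimProximinal C ∧ ∀ A : Set X, A.Nonempty → Bornology.IsBounded A →
    ∀ V : Set X, V ∈ 𝓝 (0 : WeakSpace ℝ X) → ∃ δ > (0 : ℝ),
      simBestApprox A C δ ⊆ simBest A C + V

/-! ### Weak limits and weak compactness of sequences -/

/-- By the Banach–Alaoglu theorem in the bidual, a bounded family converges weak-* along any
ultrafilter. -/
theorem exists_bidual_limit {Y : Type*} [NormedAddCommGroup Y] [NormedSpace ℝ Y] {ι : Type*}
    {y : ι → Y} {R : ℝ} (hR : ∀ n, ‖y n‖ ≤ R) (U : Ultrafilter ι) :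
    ∃ ξ : StrongDual ℝ (StrongDual ℝ Y),
      ∀ f : Y →L[ℝ] ℝ, Tendsto (fun n => f (y n)) U (𝓝 (ξ f)) := by
  have hc := WeakDual.isCompact_closedBall (𝕜 := ℝ) (0 : StrongDual ℝ (StrongDual ℝ Y)) R
  let J : ι → WeakDual ℝ (StrongDual ℝ Y) := fun n =>
    StrongDual.toWeakDual (NormedSpace.inclusionInDoubleDual ℝ Y (y n))
  obtain ⟨ξ, -, hξ⟩ := hc.ultrafilter_le_nhds (U.map J) (by
    rw [le_principal_iff, Ultrafilter.coe_map, Filter.mem_map]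
    refine Filter.univ_mem' fun n => mem_closedBall_zero_iff.2 ?_
    exact (NormedSpace.double_dual_bound ℝ Y (y n)).trans (hR n))
  refine ⟨WeakDual.toStrongDual ξ, fun f => ?_⟩
  have h1 : Tendsto J U (𝓝 ξ) := hξ
  exact ((WeakDual.eval_continuous f).tendsto ξ).comp h1

/-- Mazur's theorem: a closed convex set contains the weak limits of its members. -/
theorem mem_of_weak_limit {ι : Type*} {l : Filter ι} [l.NeBot] {C : Set X} (hC : Convex ℝ C)
    (hcl : IsClosed C) {y : ι → X} {z : X} (hy : ∀ᶠ n in l, y n ∈ C)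
    (hz : ∀ f : X →L[ℝ] ℝ, Tendsto (fun n => f (y n)) l (𝓝 (f z))) : z ∈ C := by
  by_contra hzC
  obtain ⟨f, u, hu, hfu⟩ := geometric_hahn_banach_closed_point hC hcl hzC
  exact absurd (le_of_tendsto (hz f) (hy.mono fun n hn => (hu _ hn).le)) (not_le.mpr hfu)

/-- Hahn–Banach: the restriction of `ξ` to `M` extends to a functional of norm at most `θ`. The
one-sided bound suffices because `M` is symmetric. -/
theorem exists_norm_le_eqOn {V : Type*} [NormedAddCommGroup V] [NormedSpace ℝ V]
    {M : Submodule ℝ V} {ξ : V →L[ℝ] ℝ} {θ : ℝ} (hθ : 0 ≤ θ) (h : ∀ f ∈ M, ξ f ≤ θ * ‖f‖) :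
    ∃ η : V →L[ℝ] ℝ, ‖η‖ ≤ θ ∧ ∀ f ∈ M, η f = ξ f := by
  obtain ⟨η, hη, hηn⟩ := exists_extension_norm_eq M (ξ.comp M.subtypeL)
  refine ⟨η, hηn.trans_le ?_, fun f hf => hη ⟨f, hf⟩⟩
  refine ContinuousLinearMap.opNorm_le_bound _ hθ fun f => ?_
  have hneg := h (-f) (M.neg_mem f.2)
  rw [map_neg, norm_neg] at hneg
  exact abs_le.2 ⟨by
    change -(θ * ‖(f : V)‖) ≤ ξ f
    linarith, h f f.2⟩

/-- Helly's theorem, in the form used here: if `ξ` in the bidual stays at distance more than `θ` from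
`X`, then finitely many vectors of `X` can be annihilated by a functional `f` of norm at most one
with `ξ f > θ`. Otherwise `ξ` would agree, on the annihilator of these vectors, with some `η` of norm
at most `θ`; then `ξ - η` lies in the span of the vectors, so `ξ` is within `θ` of `X`. -/
theorem exists_functional_of_far {ξ : StrongDual ℝ (StrongDual ℝ X)} {θ : ℝ} (hθ : 0 < θ)
    (hfar : ∀ x, θ < ‖ξ - NormedSpace.inclusionInDoubleDual ℝ X x‖) (y : ℕ → X) (m : ℕ) :
    ∃ f : X →L[ℝ] ℝ, ‖f‖ ≤ 1 ∧ (∀ i < m, f (y i) = 0) ∧ θ < ξ f := by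
  by_contra! hcon
  let J := NormedSpace.inclusionInDoubleDual ℝ X
  obtain ⟨M, hMdef⟩ : ∃ M : Submodule ℝ (StrongDual ℝ X),
      M = ⨅ i : Fin m, LinearMap.ker (J (y i)).toLinearMap := ⟨_, rfl⟩
  have hM : ∀ f ∈ M, ∀ i < m, f (y i) = 0 := by
    intro f hf i hi
    rw [hMdef] at hf
    exact (Submodule.mem_iInf _).1 hf ⟨i, hi⟩
  have hbd : ∀ f ∈ M, ξ f ≤ θ * ‖f‖ := by
    intro f hf
    rcases eq_or_ne f 0 with rfl | hf0
    · simp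
    · have hpos : 0 < ‖f‖ := norm_pos_iff.2 hf0
      have := hcon (‖f‖⁻¹ • f) (by rw [norm_smul, norm_inv, norm_norm, inv_mul_cancel₀ hpos.ne'])
        (fun i hi => by simp [hM f hf i hi])
      rw [map_smul, smul_eq_mul, inv_mul_le_iff₀ hpos] at this
      linarith
  obtain ⟨η, hηn, hη⟩ := exists_norm_le_eqOn hθ.le hbd
  have hspan : (ξ - η).toLinearMap ∈
      Submodule.span ℝ (Set.range fun i : Fin m => (J (y i)).toLinearMap) := by
    refine mem_span_of_iInf_ker_le_ker fun f hf => ?_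
    exact sub_eq_zero.2 (hη f (hMdef ▸ hf)).symm
  have hex : ∃ x, (ξ - η).toLinearMap = (J x).toLinearMap := by
    obtain ⟨c, hc⟩ := (Submodule.mem_span_range_iff_exists_fun ℝ).1 hspan
    refine ⟨∑ i, c i • y i, ?_⟩
    rw [← hc]
    ext f
    simp [J, map_sum]
  obtain ⟨x, hx⟩ := hex
  have hx' : ξ - J x = η := by
    ext f
    have := LinearMap.congr_fun hx f
    change ξ f - η f = J x f at this
    change ξ f - J x f = η f
    linarith
  have := hfar x
  change θ < ‖ξ - J x‖ at this
  rw [hx'] at this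
  linarith

/-- If every subsequence of a bounded sequence has a point common to the closed convex hulls of all
its tails, then the sequence converges weakly in `X` along every ultrafilter finer than `atTop`. -/
theorem exists_weak_limit_of_convex [CompleteSpace X] {y : ℕ → X} {R : ℝ} (hR : ∀ n, ‖y n‖ ≤ R)
    (hy : ∀ φ : ℕ → ℕ, StrictMono φ →
      ∃ z, ∀ N, z ∈ closure (convexHull ℝ ((y ∘ φ) '' Set.Ici N)))
    (U : Ultrafilter ℕ) (hU : (U : Filter ℕ) ≤ atTop) :
    ∃ z, ∀ f : X →L[ℝ] ℝ, Tendsto (fun n => f (y n)) U (𝓝 (f z)) := by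
  obtain ⟨ξ, hξ⟩ := exists_bidual_limit hR U
  let J := NormedSpace.inclusionInDoubleDual ℝ X
  suffices h : ξ ∈ Set.range J by
    obtain ⟨z, rfl⟩ := h
    exact ⟨z, hξ⟩
  by_contra hnot
  have hiso : Isometry J := (NormedSpace.inclusionInDoubleDualLi (E := X) ℝ).isometry
  have hclosed : IsClosed (Set.range J) := hiso.isClosedEmbedding.isClosed_range
  have hpos : 0 < Metric.infDist ξ (Set.range J) :=
    (hclosed.notMem_iff_infDist_pos (Set.range_nonempty J)).1 hnot
  obtain ⟨θ, hθ, hθd⟩ := exists_between hpos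
  have hfar : ∀ x, θ < ‖ξ - J x‖ := fun x =>
    (hθd.trans_le (Metric.infDist_le_dist_of_mem ⟨x, rfl⟩)).trans_eq (dist_eq_norm ξ (J x))
  -- `G M` annihilates `y 0, …, y (M - 1)` although `ξ (G M) > θ`.
  choose G hG1 hG0 hGθ using exists_functional_of_far hθ hfar y
  -- As `ξ` is the limit along `U`, a subsequence satisfies `G M (y (φ k)) > θ` for all `M ≤ k`.
  obtain ⟨φ, hφ, hφG⟩ := extraction_forall_of_frequently
    (P := fun k n => ∀ M ≤ k, θ < G M (y n)) (fun k => by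
      have : ∀ᶠ n in (U : Filter ℕ), ∀ M ≤ k, θ < G M (y n) :=
        (Set.finite_Iic k).eventually_all.2 fun M _ => (hξ (G M)).eventually_const_lt (hGθ M)
      exact this.frequently.filter_mono hU)
  obtain ⟨z, hz⟩ := hy φ hφ
  have hge : ∀ M, θ ≤ G M z := fun M => by
    have hsub : closure (convexHull ℝ ((y ∘ φ) '' Set.Ici M)) ⊆ {x | θ ≤ G M x} := by
      refine closure_minimal (convexHull_min ?_ ?_) (isClosed_le continuous_const (G M).continuous)
      · rintro _ ⟨k, hk, rfl⟩
        exact (hφG k M hk).le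
      · exact convex_halfSpace_ge (G M).toLinearMap.isLinear θ
    exact hsub (hz M)
  have hw : convexHull ℝ ((y ∘ φ) '' Set.Ici 0) ⊆ {x | ∀ᶠ M in atTop, G M x = 0} := by
    refine convexHull_min ?_ ?_
    · rintro _ ⟨k, -, rfl⟩
      exact (eventually_gt_atTop (φ k)).mono fun M hM => hG0 M _ hM
    · intro u hu v hv a b _ _ _
      filter_upwards [hu, hv] with M h1 h2
      simp [h1, h2]
  obtain ⟨w, hwmem, hwz⟩ := Metric.mem_closure_iff.1 (hz 0) θ hθ
  obtain ⟨M, hM⟩ := (hw hwmem).exists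
  have h1 : G M (z - w) ≤ ‖z - w‖ :=
    (le_abs_self _).trans (((G M).le_opNorm _).trans
      (mul_le_of_le_one_left (norm_nonneg _) (hG1 M)))
  rw [map_sub, hM, ← dist_eq_norm] at h1
  linarith [hge M]

/-- The Eberlein–Šmulian extraction: if a bounded sequence converges weakly along every ultrafilter
finer than `atTop`, it has a weakly convergent subsequence. -/
theorem exists_weakTendsto_subseq {y : ℕ → X} {R : ℝ} (hR : ∀ n, ‖y n‖ ≤ R)
    (hy : ∀ U : Ultrafilter ℕ, (U : Filter ℕ) ≤ atTop →
      ∃ z, ∀ f : X →L[ℝ] ℝ, Tendsto (fun n => f (y n)) U (𝓝 (f z))) :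
    ∃ z, ∃ φ : ℕ → ℕ, StrictMono φ ∧ WeakTendsto (y ∘ φ) z := by
  let S : Submodule ℝ X := (Submodule.span ℝ (Set.range y)).topologicalClosure
  have hS : IsClosed (S : Set X) := Submodule.isClosed_topologicalClosure _
  have hyS : ∀ n, y n ∈ S := fun n =>
    Submodule.le_topologicalClosure _ (Submodule.subset_span ⟨n, rfl⟩)
  have hsep : TopologicalSpace.IsSeparable (S : Set X) :=
    ((Set.countable_range y).isSeparable.span (R := ℝ)).closure
  obtain ⟨D, hDc, hD⟩ := hsep
  obtain ⟨x, hx⟩ : ∃ x : ℕ → X, insert 0 D = Set.range x :=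
    (hDc.insert 0).exists_eq_range (Set.insert_nonempty _ _)
  -- Norming functionals of a dense sequence separate the points of the closed span `S`.
  choose g hg1 hgx using fun j => exists_dual_vector'' ℝ (x j)
  have hsepg : ∀ u ∈ S, (∀ j, g j u = 0) → u = 0 := by
    intro u hu h0
    by_contra hne
    have hpos : 0 < ‖u‖ / 2 := by positivity
    obtain ⟨v, hvD, hv⟩ := Metric.mem_closure_iff.1 (hD hu) _ hpos
    obtain ⟨j, rfl⟩ : v ∈ Set.range x := hx ▸ Set.mem_insert_of_mem _ hvD
    have h1 : g j (x j - u) ≤ ‖x j - u‖ :=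
      (le_abs_self _).trans (((g j).le_opNorm _).trans
        (mul_le_of_le_one_left (norm_nonneg _) (hg1 j)))
    rw [map_sub, h0 j, hgx j, sub_zero, ← dist_eq_norm, dist_comm] at h1
    have h2 := norm_sub_norm_le u (x j)
    rw [← dist_eq_norm] at h2
    simp only [RCLike.ofReal_real_eq_id, id] at h1
    linarith
  -- Tychonoff in place of a diagonal argument: all `g j (y (φ n))` converge. The subsequence then has
  -- only one weak limit point, hence converges weakly to it.
  obtain ⟨L, -, φ, hφ, hL⟩ :=
    (isCompact_univ_pi fun _ : ℕ => isCompact_Icc (a := -R) (b := R)).tendsto_subseq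
      (x := fun n j => g j (y n)) (fun n j _ => by
        rw [Set.mem_Icc, ← abs_le]
        exact ((g j).le_opNorm _).trans
          ((mul_le_of_le_one_left (norm_nonneg _) (hg1 j)).trans (hR n)))
  have hlim : ∀ V : Ultrafilter ℕ, (V : Filter ℕ) ≤ atTop → ∃ z ∈ S, (∀ j, g j z = L j) ∧
      ∀ f : X →L[ℝ] ℝ, Tendsto (fun n => f (y (φ n))) V (𝓝 (f z)) := by
    intro V hV
    obtain ⟨z, hz⟩ := hy (V.map φ) ((Filter.map_mono hV).trans hφ.tendsto_atTop)
    have hz' : ∀ f : X →L[ℝ] ℝ, Tendsto (fun n => f (y (φ n))) V (𝓝 (f z)) := fun f =>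
      (hz f).comp tendsto_map
    refine ⟨z, mem_of_weak_limit S.convex hS (Eventually.of_forall fun n => hyS (φ n)) hz', ?_, hz'⟩
    intro j
    exact tendsto_nhds_unique (hz' (g j)) (((tendsto_pi_nhds.1 hL) j).mono_left hV)
  obtain ⟨z, hzS, hzL, -⟩ := hlim (Ultrafilter.of atTop) (Ultrafilter.of_le _)
  refine ⟨z, φ, hφ, fun f => ?_⟩
  rw [tendsto_iff_ultrafilter]
  intro V hV
  obtain ⟨z', hz'S, hz'L, hz'⟩ := hlim V hV
  have : z' - z = 0 := hsepg _ (S.sub_mem hz'S hzS) fun j => by rw [map_sub, hz'L, hzL, sub_self]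
  rw [← sub_eq_zero.1 this]
  exact hz' f

/-! ### Simultaneous approximation -/

theorem bddAbove_norm_sub {A : Set X} (hA : Bornology.IsBounded A) (y : X) :
    BddAbove (Set.range fun a : A => ‖(a : X) - y‖) := by
  obtain ⟨r, hr⟩ := hA.exists_norm_le
  refine ⟨r + ‖y‖, ?_⟩
  rintro _ ⟨a, rfl⟩
  exact (norm_sub_le _ _).trans (by gcongr; exact hr a a.2)

theorem norm_sub_le_simSup {A : Set X} (hA : Bornology.IsBounded A) {a : X} (ha : a ∈ A) (y : X) :
    ‖a - y‖ ≤ simSup A y :=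
  le_ciSup (bddAbove_norm_sub hA y) ⟨a, ha⟩

theorem simSup_le {A : Set X} (hne : A.Nonempty) {y : X} {r : ℝ} (h : ∀ a ∈ A, ‖a - y‖ ≤ r) :
    simSup A y ≤ r := by
  have := hne.to_subtype
  exact ciSup_le fun a => h a a.2

theorem simDist_le_simSup {A C : Set X} {y : X} (hy : y ∈ C) : simDist A C ≤ simSup A y := by
  refine ciInf_le (f := fun y : C => simSup A (y : X)) ⟨0, ?_⟩ ⟨y, hy⟩
  rintro _ ⟨y, rfl⟩
  exact Real.iSup_nonneg fun a => norm_nonneg _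

theorem convex_simSup_le {A : Set X} (hne : A.Nonempty) (hA : Bornology.IsBounded A) (r : ℝ) :
    Convex ℝ {y | simSup A y ≤ r} := by
  have : {y | simSup A y ≤ r} = ⋂ a ∈ A, Metric.closedBall a r := by
    ext y
    simp only [Set.mem_ofPred_eq, Set.mem_iInter, Metric.mem_closedBall']
    simp only [dist_eq_norm]
    exact ⟨fun h a ha => (norm_sub_le_simSup hA ha y).trans h, simSup_le hne⟩
  rw [this]
  exact convex_iInter₂ fun a _ => convex_closedBall a r

theorem simSup_le_add_norm {A : Set X} (hne : A.Nonempty) (hA : Bornology.IsBounded A) (x y : X) :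
    simSup A x ≤ simSup A y + ‖y - x‖ :=
  simSup_le hne fun a ha => by
    rw [← sub_add_sub_cancel a y x]
    exact (norm_add_le _ _).trans (by gcongr; exact norm_sub_le_simSup hA ha y)

theorem simSup_image_sub (A : Set X) (e f : X) :
    simSup ((fun a => a - e) '' A) f = simSup A (e + f) := by
  unfold simSup
  simp only [iSup]
  congr 1
  ext r
  simp [sub_sub]

/-- The open mapping theorem for the addition map `E × F → E + F`. -/
theorem exists_bounded_decomposition [CompleteSpace X] {E F : Subspace ℝ X}
    (hE : IsClosed (E : Set X)) (hF : IsClosed (F : Set X))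
    (hEF : IsClosed ((E : Set X) + (F : Set X))) :
    ∃ K : ℝ, 0 < K ∧ ∀ y ∈ (E : Set X) + (F : Set X), ∃ e ∈ E, ∃ f ∈ F, e + f = y ∧
      ‖e‖ ≤ K * ‖y‖ := by
  have := hE.completeSpace_coe
  have := hF.completeSpace_coe
  rw [← Submodule.coe_sup] at hEF
  have : CompleteSpace (E ⊔ F : Submodule ℝ X) := hEF.completeSpace_coe
  let T : (E × F) →L[ℝ] (E ⊔ F : Submodule ℝ X) :=
    (E.subtypeL.coprod F.subtypeL).codRestrict (E ⊔ F) fun p =>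
      Submodule.add_mem_sup p.1.2 p.2.2
  have hT : Function.Surjective T := by
    rintro ⟨y, hy⟩
    obtain ⟨e, he, f, hf, rfl⟩ := Submodule.mem_sup.1 hy
    exact ⟨(⟨e, he⟩, ⟨f, hf⟩), rfl⟩
  obtain ⟨K, hK, h⟩ := T.exists_preimage_norm_le hT
  refine ⟨K, hK, fun y hy => ?_⟩
  rw [← Submodule.coe_sup] at hy
  obtain ⟨p, hp, hpn⟩ := h ⟨y, hy⟩
  exact ⟨p.1, p.1.2, p.2, p.2.2, congrArg Subtype.val hp, (norm_fst_le p).trans hpn⟩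

/-- For a minimizing sequence `e n + f n` with `e n` bounded in the reflexive `E`, the closed convex
hulls of the tails have a common point. If `e₀` is a weak limit point of `e`, Mazur's theorem gives
convex combinations of tails of the pairs `(e n, f n)` whose first components tend to `e₀` in norm;
their second components form a minimizing sequence in `F` for `A - e₀`, to which the hypothesis on
`F` applies. -/
theorem exists_mem_closure_convexHull {A : Set X} (hne : A.Nonempty) (hA : Bornology.IsBounded A)
    {E F : Subspace ℝ X} (hrefl : Function.Surjective (NormedSpace.inclusionInDoubleDual ℝ E))
    (hFawc : SimApproxWeakCompact (F : Set X)) {e f : ℕ → X} (he : ∀ n, e n ∈ E)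
    (hf : ∀ n, f n ∈ F) {R : ℝ} (hR : ∀ n, ‖e n‖ ≤ R)
    (hmin : IsMinimizing A ((E : Set X) + (F : Set X)) (fun n => e n + f n)) :
    ∃ z, ∀ N, z ∈ closure (convexHull ℝ ((fun n => e n + f n) '' Set.Ici N)) := by
  obtain ⟨e₀, he₀⟩ : ∃ e₀ : E, ∀ g : X →L[ℝ] ℝ,
      Tendsto (fun n => g (e n)) (Ultrafilter.of atTop : Ultrafilter ℕ) (𝓝 (g e₀)) := by
    obtain ⟨ξ, hξ⟩ := exists_bidual_limit (y := fun n => (⟨e n, he n⟩ : E)) (R := R) hR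
      (Ultrafilter.of atTop)
    obtain ⟨e₀, rfl⟩ := hrefl ξ
    exact ⟨e₀, fun g => hξ (g.comp E.subtypeL)⟩
  let q : ℕ → X × X := fun n => (e n, f n)
  have hstep : ∀ j : ℕ, ∃ p ∈ convexHull ℝ (q '' Set.Ici j), ‖p.1 - e₀‖ < 1 / ((j : ℝ) + 1) := by
    intro j
    have h1 : (e₀ : X) ∈ closure (convexHull ℝ (e '' Set.Ici j)) := by
      refine mem_of_weak_limit (convex_convexHull ℝ _).closure isClosed_closure ?_ he₀
      filter_upwards [Ultrafilter.of_le _ (Ici_mem_atTop j)] with n hn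
      exact subset_closure (subset_convexHull ℝ _ ⟨n, hn, rfl⟩)
    obtain ⟨u, hu, hud⟩ := Metric.mem_closure_iff.1 h1 _ (Nat.one_div_pos_of_nat (n := j) (α := ℝ))
    have h2 : e '' Set.Ici j = LinearMap.fst ℝ X X '' (q '' Set.Ici j) := by
      rw [Set.image_image]; rfl
    rw [h2, ← LinearMap.image_convexHull] at hu
    obtain ⟨p, hp, rfl⟩ := hu
    exact ⟨p, hp, by rwa [dist_comm, dist_eq_norm] at hud⟩
  choose p hp hpe using hstep
  have hpE : ∀ j, (p j).1 ∈ E := fun j =>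
    convexHull_min (t := {x : X × X | x.1 ∈ E}) (by rintro _ ⟨n, -, rfl⟩; exact he n)
      (E.convex.linear_preimage (LinearMap.fst ℝ X X)) (hp j)
  have hpF : ∀ j, (p j).2 ∈ F := fun j =>
    convexHull_min (t := {x : X × X | x.2 ∈ F}) (by rintro _ ⟨n, -, rfl⟩; exact hf n)
      (F.convex.linear_preimage (LinearMap.snd ℝ X X)) (hp j)
  have hpsum : ∀ j, (p j).1 + (p j).2 ∈ convexHull ℝ ((fun n => e n + f n) '' Set.Ici j) :=
    fun j => convexHull_min
      (t := {x : X × X | x.1 + x.2 ∈ convexHull ℝ ((fun n => e n + f n) '' Set.Ici j)})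
      (by rintro _ ⟨n, hn, rfl⟩; exact subset_convexHull ℝ _ ⟨n, hn, rfl⟩)
      ((convex_convexHull ℝ _).linear_preimage (LinearMap.fst ℝ X X + LinearMap.snd ℝ X X)) (hp j)
  set d := simDist A ((E : Set X) + (F : Set X)) with hd
  have hpe0 : Tendsto (fun j => ‖(p j).1 - e₀‖) atTop (𝓝 0) :=
    squeeze_zero (fun _ => norm_nonneg _) (fun j => (hpe j).le)
      tendsto_one_div_add_atTop_nhds_zero_nat
  have hge : ∀ x ∈ F, d ≤ simSup A (e₀ + x) := fun x hx =>
    simDist_le_simSup (Set.add_mem_add e₀.2 hx)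
  have hlim : Tendsto (fun j => simSup A (e₀ + (p j).2)) atTop (𝓝 d) := by
    refine tendsto_order.2 ⟨fun r hr => Eventually.of_forall fun j =>
      hr.trans_le (hge _ (hpF j)), fun r hr => ?_⟩
    obtain ⟨s, hds, hsr⟩ := exists_between hr
    obtain ⟨N, hN⟩ := eventually_atTop.1 (hmin.2.eventually_lt_const hds)
    filter_upwards [eventually_ge_atTop N, hpe0.eventually_lt_const (sub_pos.2 hsr)] with j hj hj'
    have h1 : simSup A ((p j).1 + (p j).2) ≤ s :=
      convexHull_min (t := {x | simSup A x ≤ s})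
        (by rintro _ ⟨n, hn, rfl⟩; exact (hN n (le_trans hj hn)).le)
        (convex_simSup_le hne hA s) (hpsum j)
    have h2 := simSup_le_add_norm hne hA (e₀ + (p j).2) ((p j).1 + (p j).2)
    rw [add_sub_add_right_eq_sub] at h2
    linarith
  let B : Set X := (fun a => a - (e₀ : X)) '' A
  -- Translating by `e₀` does not change the distance: `d(A - e₀, F) = d(A, E + F)`.
  have hBd : simDist B (F : Set X) = d := by
    refine le_antisymm (ge_of_tendsto' hlim fun j => ?_) (le_ciInf fun x => ?_)
    · rw [← simSup_image_sub]
      exact simDist_le_simSup (hpF j)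
    · rw [simSup_image_sub]
      exact hge _ x.2
  have hBb : Bornology.IsBounded B := by
    obtain ⟨r, hr⟩ := hA.exists_norm_le
    refine isBounded_iff_forall_norm_le.2 ⟨r + ‖(e₀ : X)‖, ?_⟩
    rintro _ ⟨a, ha, rfl⟩
    exact (norm_sub_le _ _).trans (by gcongr; exact hr a ha)
  obtain ⟨c, -, φ, hφ, hc⟩ := hFawc B (hne.image _) hBb (fun j => (p j).2) ⟨hpF, by
    rw [hBd]
    simpa only [B, simSup_image_sub] using hlim⟩
  refine ⟨e₀ + c, fun N => ?_⟩
  refine mem_of_weak_limit (l := atTop) (y := fun k => (p (φ k)).1 + (p (φ k)).2)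
    (convex_convexHull ℝ _).closure isClosed_closure ?_ fun g => ?_
  · filter_upwards [eventually_ge_atTop N] with k hk
    refine subset_closure (convexHull_mono (Set.image_mono (Set.Ici_subset_Ici.2 ?_)) (hpsum _))
    exact hk.trans (hφ.id_le k)
  · have h1 : Tendsto (fun j => (p j).1) atTop (𝓝 (e₀ : X)) :=
      tendsto_iff_norm_sub_tendsto_zero.2 hpe0
    simp only [map_add]
    exact ((g.continuous.tendsto _).comp (h1.comp hφ.tendsto_atTop)).add (hc g)

/-- The sum of a closed reflexive subspace and a simultaneously approximatively weakly compact
closed subspace, when closed, is simultaneously approximatively weakly compact. -/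
theorem reflexive_add_simApproxWeakCompact_subspace [CompleteSpace X]
    (E F : Subspace ℝ X) (hE : IsClosed (E : Set X)) (hF : IsClosed (F : Set X))
    (hrefl : Function.Surjective (NormedSpace.inclusionInDoubleDual ℝ E))
    (hFawc : SimApproxWeakCompact (F : Set X))
    (hEF : IsClosed ((E : Set X) + (F : Set X))) :
    SimApproxWeakCompact ((E : Set X) + (F : Set X)) := by
  intro A hne hA y hy
  obtain ⟨R, hR⟩ : ∃ R, ∀ n, ‖y n‖ ≤ R := by
    obtain ⟨a, ha⟩ := hne
    obtain ⟨r, hr⟩ := hy.2.bddAbove_range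
    refine ⟨‖a‖ + r, fun n => ?_⟩
    have h1 := norm_sub_le_simSup hA ha (y n)
    have h2 : simSup A (y n) ≤ r := hr ⟨n, rfl⟩
    have h3 := norm_sub_norm_le (y n) a
    rw [norm_sub_rev] at h3
    linarith
  obtain ⟨K, hK, hdec⟩ := exists_bounded_decomposition hE hF hEF
  choose e he f hf hef hen using fun n => hdec (y n) (hy.1 n)
  have hconv : ∀ φ : ℕ → ℕ, StrictMono φ →
      ∃ z, ∀ N, z ∈ closure (convexHull ℝ ((y ∘ φ) '' Set.Ici N)) := by
    intro φ hφ
    have hyφ : y ∘ φ = fun n => e (φ n) + f (φ n) := funext fun n => (hef (φ n)).symm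
    have hmin : IsMinimizing A ((E : Set X) + (F : Set X)) (y ∘ φ) :=
      ⟨fun n => hy.1 (φ n), hy.2.comp hφ.tendsto_atTop⟩
    rw [hyφ] at hmin ⊢
    exact exists_mem_closure_convexHull hne hA hrefl hFawc (fun n => he (φ n)) (fun n => hf (φ n))
      (fun n => (hen (φ n)).trans (mul_le_mul_of_nonneg_left (hR (φ n)) hK.le)) hmin
  obtain ⟨c, φ, hφ, hc⟩ := exists_weakTendsto_subseq hR (exists_weak_limit_of_convex hR hconv)
  exact ⟨c, mem_of_weak_limit (E.convex.add F.convex) hEF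
    (Eventually.of_forall fun k => hy.1 (φ k)) hc, φ, hφ, hc⟩
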